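/- arXiv:1604.07945 — 4 statements merged into one kernel-verified Lean document; each statement's English description precedes it below -/
import Mathlib

section
/- Let σ > 1. The function ω ↦ α_{0,ω} is differentiable at every ω = (ω₀,ω₁) ∈ Ω, with partial derivatives ∂_{ω₀} α_{0,ω} = −(2/κ_ω²) α_{0,ω} − (ω₁/(4σ ω₀^{3/2})) α_{1,ω} and ∂_{ω₁} α_{0,ω} = (ω₁/κ_ω²) α_{0,ω} + (1/(2σ √ω₀)) α_{1,ω}. -/
/-!
The substitution `y = κ_ω x` gives `α_{n,ω} = κ_ω⁻¹ F(-1/σ - n, ω₁ / (2√ω₀))`, where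
`F(s, a) = ∫₀^∞ (cosh (σ y) - a)^s dy`. On `Ω` one has `ω₁ / (2√ω₀) < 1`, and for `s < 0`, `a < 1`
the integrand of `F` is dominated by a multiple of `exp (s σ y)`, locally uniformly in `a`. So `F`
may be differentiated under the integral sign, with `∂ₐ F(s, a) = -s F(s - 1, a)`. The partial
derivatives of `α_{0,ω}` then follow from the product and chain rules.
-/

open Real MeasureTheory

/-- `κ_ω = √(4ω₀ − ω₁²)` as a function of `ω = (ω₀, ω₁)`. -/
noncomputable def kappa (ω : ℝ × ℝ) : ℝ := Real.sqrt (4 * ω.1 - ω.2 ^ 2)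

/-- The integral `α_{n,ω}` as a function of `ω = (ω₀, ω₁)`. -/
noncomputable def alphaP (σ : ℝ) (n : ℕ) (ω : ℝ × ℝ) : ℝ :=
  ∫ x in Set.Ioi (0 : ℝ),
    (Real.cosh (σ * kappa ω * x) - ω.2 / (2 * Real.sqrt ω.1)) ^ (-(1 / σ) - (n : ℝ))

/-- The rescaled integral `F(s, a) = ∫₀^∞ (cosh (σ y) - a)^s dy`. -/
noncomputable def coshInt (σ s a : ℝ) : ℝ :=
  ∫ y in Set.Ioi (0 : ℝ), (Real.cosh (σ * y) - a) ^ s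

lemma cosh_sub_pos {a : ℝ} (ha : a < 1) (u : ℝ) : 0 < Real.cosh u - a := by
  linarith [Real.one_le_cosh u]

lemma continuous_coshInt_integrand (σ s : ℝ) {a : ℝ} (ha : a < 1) :
    Continuous fun y : ℝ => (Real.cosh (σ * y) - a) ^ s :=
  Continuous.rpow_const (by fun_prop) fun y => Or.inl (cosh_sub_pos ha _).ne'

/-- The exponential lower bound that makes every integrand here integrable on `(0, ∞)`. -/
lemma exists_mul_exp_le_cosh_sub {a : ℝ} (ha : a < 1) :
    ∃ c : ℝ, 0 < c ∧ ∀ u : ℝ, c * Real.exp u ≤ Real.cosh u - a := by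
  have hexp : ∀ u : ℝ, Real.exp u ≤ 2 * Real.cosh u := fun u => by
    rw [Real.cosh_eq]; linarith [Real.exp_pos (-u)]
  rcases le_total 0 a with h0 | h0
  · -- here `cosh u - a ≥ (1 - a) cosh u`, because `cosh u ≥ 1`
    refine ⟨(1 - a) / 2, by linarith, fun u => ?_⟩
    nlinarith [hexp u, Real.one_le_cosh u]
  · exact ⟨1 / 2, by norm_num, fun u => by linarith [hexp u]⟩

lemma integrableOn_coshInt {σ s a : ℝ} (hσ : 0 < σ) (hs : s < 0) (ha : a < 1) :
    IntegrableOn (fun y : ℝ => (Real.cosh (σ * y) - a) ^ s) (Set.Ioi 0) := by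
  obtain ⟨c, hc, hle⟩ := exists_mul_exp_le_cosh_sub ha
  have hint : IntegrableOn (fun y : ℝ => c ^ s * Real.exp (s * σ * y)) (Set.Ioi 0) :=
    (integrableOn_exp_mul_Ioi (mul_neg_of_neg_of_pos hs hσ) 0).const_mul _
  refine hint.mono' (continuous_coshInt_integrand σ s ha).aestronglyMeasurable ?_
  refine Filter.Eventually.of_forall fun y => ?_
  rw [Real.norm_of_nonneg (Real.rpow_nonneg (cosh_sub_pos ha _).le _)]
  calc (Real.cosh (σ * y) - a) ^ s ≤ (c * Real.exp (σ * y)) ^ s :=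
        Real.rpow_le_rpow_of_nonpos (by positivity) (hle _) hs.le
    _ = c ^ s * Real.exp (s * σ * y) := by
        rw [Real.mul_rpow hc.le (Real.exp_pos _).le, ← Real.exp_mul]
        ring_nf

lemma hasDerivAt_coshInt {σ s a : ℝ} (hσ : 0 < σ) (hs : s < 0) (ha : a < 1) :
    HasDerivAt (coshInt σ s) (-s * coshInt σ (s - 1) a) a := by
  have hb : (1 + a) / 2 < 1 := by linarith
  have key := hasDerivAt_integral_of_dominated_loc_of_deriv_le
    (μ := volume.restrict (Set.Ioi (0 : ℝ))) (x₀ := a) (s := Set.Iio ((1 + a) / 2))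
    (F := fun a y => (Real.cosh (σ * y) - a) ^ s)
    (F' := fun a y => -s * (Real.cosh (σ * y) - a) ^ (s - 1))
    (bound := fun y => -s * (Real.cosh (σ * y) - (1 + a) / 2) ^ (s - 1))
    (Iio_mem_nhds (by linarith))
    (by
      filter_upwards [Iio_mem_nhds ha] with x hx
      exact (continuous_coshInt_integrand σ s hx).aestronglyMeasurable)
    (integrableOn_coshInt hσ hs ha)
    ((continuous_coshInt_integrand σ (s - 1) ha).const_smul (-s)).aestronglyMeasurable
    (by
      refine Filter.Eventually.of_forall fun y x hx => ?_
      have hx' : x < (1 + a) / 2 := hx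
      rw [norm_mul, Real.norm_of_nonneg (by linarith : 0 ≤ -s),
        Real.norm_of_nonneg (Real.rpow_nonneg (cosh_sub_pos (hx'.trans hb) _).le _)]
      exact mul_le_mul_of_nonneg_left
        (Real.rpow_le_rpow_of_nonpos (cosh_sub_pos hb _) (by linarith) (by linarith))
        (by linarith))
    ((integrableOn_coshInt hσ (by linarith) hb).const_mul _)
    (by
      refine Filter.Eventually.of_forall fun y x hx => ?_
      have hx' : x < 1 := lt_trans hx hb
      have h := ((hasDerivAt_id x).const_sub (Real.cosh (σ * y))).rpow_const (p := s)
        (Or.inl (cosh_sub_pos hx' _).ne')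
      exact h.congr_deriv (by simp))
  have h2 := key.2
  rw [integral_const_mul] at h2
  exact h2

lemma alphaP_eq (σ : ℝ) (n : ℕ) {ω : ℝ × ℝ} (hω : ω.2 ^ 2 < 4 * ω.1) :
    alphaP σ n ω =
      (kappa ω)⁻¹ * coshInt σ (-(1 / σ) - n) (ω.2 / (2 * Real.sqrt ω.1)) := by
  have hκ : 0 < kappa ω := Real.sqrt_pos.2 (by linarith)
  have h := integral_comp_mul_left_Ioi
    (fun y => (Real.cosh (σ * y) - ω.2 / (2 * Real.sqrt ω.1)) ^ (-(1 / σ) - (n : ℝ))) 0 hκ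
  simp only [mul_zero, smul_eq_mul] at h
  simp only [alphaP, coshInt, mul_assoc] at h ⊢
  exact h

lemma param_lt_one {ω : ℝ × ℝ} (hω : ω.2 ^ 2 < 4 * ω.1) : ω.2 / (2 * Real.sqrt ω.1) < 1 := by
  have h0 : 0 < ω.1 := by nlinarith [sq_nonneg ω.2]
  have hs := Real.sqrt_pos.2 h0
  rw [div_lt_one (by positivity)]
  refine lt_of_pow_lt_pow_left₀ 2 (by positivity) ?_
  rw [mul_pow, Real.sq_sqrt h0.le]
  linarith

theorem alpha0_partial_derivatives (σ : ℝ) (hσ : 1 < σ) :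
    ∀ ω : ℝ × ℝ, ω.2 ^ 2 < 4 * ω.1 →
      DifferentiableAt ℝ (alphaP σ 0) ω ∧
        fderiv ℝ (alphaP σ 0) ω (1, 0) =
          -(2 / (kappa ω) ^ 2) * alphaP σ 0 ω -
            ω.2 / (4 * σ * ω.1 ^ ((3 : ℝ) / 2)) * alphaP σ 1 ω ∧
        fderiv ℝ (alphaP σ 0) ω (0, 1) =
          ω.2 / (kappa ω) ^ 2 * alphaP σ 0 ω +
            1 / (2 * σ * Real.sqrt ω.1) * alphaP σ 1 ω := by
  intro ω hω
  have hσ0 : 0 < σ := by linarith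
  have h0 : 0 < ω.1 := by nlinarith [sq_nonneg ω.2]
  have hs := Real.sqrt_pos.2 h0
  have hd : 0 < 4 * ω.1 - ω.2 ^ 2 := by linarith
  have hκ : 0 < kappa ω := Real.sqrt_pos.2 hd
  have hsn : -(1 / σ) - ((0 : ℕ) : ℝ) < 0 := by
    have : 0 < 1 / σ := by positivity
    simpa using this
  have hfst : HasFDerivAt (fun p : ℝ × ℝ => p.1) (ContinuousLinearMap.fst ℝ ℝ ℝ) ω :=
    hasFDerivAt_fst
  have hsnd : HasFDerivAt (fun p : ℝ × ℝ => p.2) (ContinuousLinearMap.snd ℝ ℝ ℝ) ω :=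
    hasFDerivAt_snd
  have hkap : HasFDerivAt kappa
      ((1 / (2 * kappa ω)) • ((4 : ℝ) • ContinuousLinearMap.fst ℝ ℝ ℝ -
        (2 • ω.2 ^ (2 - 1)) • ContinuousLinearMap.snd ℝ ℝ ℝ)) ω :=
    ((hfst.const_mul 4).sub (hsnd.pow 2)).sqrt hd.ne'
  have hinv := (hasDerivAt_inv hκ.ne').comp_hasFDerivAt ω hkap
  have hden := (hasDerivAt_inv (by positivity : 2 * Real.sqrt ω.1 ≠ 0)).comp_hasFDerivAt ω
    ((hfst.sqrt h0.ne').const_mul 2)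
  have hpar := hsnd.mul hden
  have hF := (hasDerivAt_coshInt hσ0 hsn (param_lt_one hω)).comp_hasFDerivAt ω hpar
  have htot := hinv.mul hF
  have hev : alphaP σ 0 =ᶠ[nhds ω] fun p =>
      (kappa p)⁻¹ * coshInt σ (-(1 / σ) - ((0 : ℕ) : ℝ)) (p.2 / (2 * Real.sqrt p.1)) := by
    have hopen : IsOpen {p : ℝ × ℝ | p.2 ^ 2 < 4 * p.1} :=
      isOpen_lt (by fun_prop) (by fun_prop)
    filter_upwards [hopen.mem_nhds hω] with p hp using alphaP_eq σ 0 hp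
  have hfin := htot.congr_of_eventuallyEq hev
  have h32 : ω.1 ^ ((3 : ℝ) / 2) = Real.sqrt ω.1 ^ 3 := by
    rw [Real.sqrt_eq_rpow, ← Real.rpow_natCast, ← Real.rpow_mul h0.le]
    norm_num
  have hA1 := alphaP_eq σ 1 hω
  have hA0 := alphaP_eq σ 0 hω
  have hexp : -(1 / σ) - ((0 : ℕ) : ℝ) - 1 = -(1 / σ) - ((1 : ℕ) : ℝ) := by simp
  refine ⟨hfin.differentiableAt, ?_, ?_⟩
  all_goals
    rw [hfin.fderiv, hA0, hA1]
    simp only [hexp, h32, Function.comp_apply, Pi.mul_apply, add_apply,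
      smul_apply, sub_apply,
      ContinuousLinearMap.coe_fst', ContinuousLinearMap.coe_snd', smul_eq_mul, ← div_eq_mul_inv]
    generalize coshInt σ (-(1 / σ) - ((1 : ℕ) : ℝ)) _ = A
    generalize coshInt σ (-(1 / σ) - ((0 : ℕ) : ℝ)) _ = B
    simp
    field_simp
    ring
end

section
/- Let 1 < σ < 2 and let a₀, a₁ : Ω → ℝ be differentiable functions satisfying, at every ω = (ω₀,ω₁) ∈ Ω: ∂_{ω₀}a₀ = −(2/κ_ω²)a₀ − (ω₁/(4σω₀^{3/2}))a₁, ∂_{ω₁}a₀ = (ω₁/κ_ω²)a₀ + (1/(2σ√ω₀))a₁, ∂_{ω₀}a₁ = −(ω₁/(σ√ω₀κ_ω²))a₀ − ((ω₁²(2+σ)+4σω₀)/(2σω₀κ_ω²))a₁, and ∂_{ω₁}a₁ = (2√ω₀/(σκ_ω²))a₀ + (2ω₁(σ+1)/(σκ_ω²))a₁. Define G(ω) = 4 κ̃_ω ω₁ (σ−2) ω₀^{1/2} a₀(ω) + 2 κ̃_ω κ_ω² a₁(ω). Then at every ω ∈ Ω, ∂_{ω₀} G(ω) = (2ω₁ κ̃_ω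 a₀(ω) / (σ κ_ω² ω₀^{1/2})) [ 4(2−3σ)(σ−2)ω₀ − (σ−1)κ_ω² ] + (κ̃_ω a₁(ω)/(σω₀)) [ 4(2−σ)ω₀ − 2σω₁² − (1+σ)κ_ω² ]. -/
/-!
The idea is to divide by `κ̃`: as a function of `ω₀`, `κ̃` is a constant multiple of
`κ^(2/σ - 2) ω₀^(-1/(2σ) - 1/2)`, and `∂_{ω₀} κ² = 4`, so its logarithmic derivative is the
rational function `4 (1/σ - 1) / κ² - (1/(2σ) + 1/2) / ω₀` (`kappaT_hasDerivAt`). The product rule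
and the equations for `∂_{ω₀} a₀` and `∂_{ω₀} a₁` then express `∂_{ω₀} G / κ̃` as a linear
combination of `a₀` and `a₁`, whose coefficients are rational in `√ω₀`, `ω₁`, `κ` and `σ`. The claim
is an identity between these coefficients, which holds with `κ` as an independent variable.
-/

open Real

/-- `κ̃_ω = 2^{1/σ−2} σ⁻¹ (1+σ)^{1/σ} κ_ω^{2/σ−2} ω₀^{−1/(2σ)−1/2}`. -/
noncomputable def kappaT (σ : ℝ) (ω : ℝ × ℝ) : ℝ :=
  (2 : ℝ) ^ (1 / σ - 2) * σ⁻¹ * (1 + σ) ^ (1 / σ) * (kappa ω) ^ (2 / σ - 2) *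
    ω.1 ^ (-(1 / (2 * σ)) - 1 / 2)

lemma omega_fst_pos {ω : ℝ × ℝ} (h : ω.2 ^ 2 < 4 * ω.1) : 0 < ω.1 := by
  nlinarith [sq_nonneg ω.2]

lemma kappa_pos {ω : ℝ × ℝ} (h : ω.2 ^ 2 < 4 * ω.1) : 0 < kappa ω :=
  Real.sqrt_pos.2 (by linarith)

lemma kappa_differentiableAt {ω : ℝ × ℝ} (h : ω.2 ^ 2 < 4 * ω.1) :
    DifferentiableAt ℝ kappa ω := by
  unfold kappa
  exact DifferentiableAt.sqrt (by fun_prop) (by linarith)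

lemma kappaT_differentiableAt (σ : ℝ) {ω : ℝ × ℝ} (h : ω.2 ^ 2 < 4 * ω.1) :
    DifferentiableAt ℝ (kappaT σ) ω := by
  unfold kappaT
  exact ((kappa_differentiableAt h).rpow_const (Or.inl (kappa_pos h).ne')).const_mul _ |>.mul
    (differentiableAt_fst.rpow_const (Or.inl (omega_fst_pos h).ne'))

lemma kappa_hasDerivAt {x y : ℝ} (h : y ^ 2 < 4 * x) :
    HasDerivAt (fun t => kappa (t, y)) (2 / kappa (x, y)) x := by
  have h1 : HasDerivAt (fun t : ℝ => 4 * t - y ^ 2) 4 x := by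
    simpa using ((hasDerivAt_id x).const_mul 4).sub_const (y ^ 2)
  have h2 := h1.sqrt (by linarith)
  refine h2.congr_deriv ?_
  change _ = 2 / Real.sqrt (4 * x - y ^ 2)
  have : Real.sqrt (4 * x - y ^ 2) ≠ 0 := (kappa_pos (ω := (x, y)) h).ne'
  field_simp
  norm_num

/-- The logarithmic derivative of `κ̃` in the direction `ω₀`. -/
lemma kappaT_hasDerivAt (σ : ℝ) {x y : ℝ} (h : y ^ 2 < 4 * x) :
    HasDerivAt (fun t => kappaT σ (t, y))
      (kappaT σ (x, y) * (4 * (1 / σ - 1) / kappa (x, y) ^ 2 - (1 / (2 * σ) + 1 / 2) / x)) x := by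
  have hk := kappa_pos (ω := (x, y)) h
  have hx : 0 < x := omega_fst_pos (ω := (x, y)) h
  have h1 := (kappa_hasDerivAt h).rpow_const (p := 2 / σ - 2) (Or.inl hk.ne')
  have h2 := (hasDerivAt_id x).rpow_const (p := -(1 / (2 * σ)) - 1 / 2) (Or.inl hx.ne')
  have h3 := (h1.const_mul ((2 : ℝ) ^ (1 / σ - 2) * σ⁻¹ * (1 + σ) ^ (1 / σ))).mul h2
  refine h3.congr_deriv ?_
  simp only [kappaT, id]
  rw [Real.rpow_sub_one hk.ne', Real.rpow_sub_one hx.ne']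
  generalize kappa (x, y) ^ (2 / σ - 2) = A
  generalize x ^ (-(1 / (2 * σ)) - 1 / 2) = B
  field_simp
  ring

/-- The partial derivative in `ω₀` as the derivative along the line `t ↦ (t, ω₁)`. -/
lemma hasDerivAt_fst_line {f : ℝ × ℝ → ℝ} {x y : ℝ} (hf : DifferentiableAt ℝ f (x, y)) :
    HasDerivAt (fun t => f (t, y)) (fderiv ℝ f (x, y) (1, 0)) x :=
  HasFDerivAt.comp_hasDerivAt (f := fun t : ℝ => (t, y)) x hf.hasFDerivAt
    ((hasDerivAt_id x).prodMk (hasDerivAt_const x y))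

theorem partial0_of_G (σ : ℝ) (hσ₁ : 1 < σ) (hσ₂ : σ < 2)
    (a₀ a₁ : ℝ × ℝ → ℝ)
    (hdiff₀ : ∀ ω : ℝ × ℝ, ω.2 ^ 2 < 4 * ω.1 → DifferentiableAt ℝ a₀ ω)
    (hdiff₁ : ∀ ω : ℝ × ℝ, ω.2 ^ 2 < 4 * ω.1 → DifferentiableAt ℝ a₁ ω)
    (h00 : ∀ ω : ℝ × ℝ, ω.2 ^ 2 < 4 * ω.1 →
      fderiv ℝ a₀ ω (1, 0) =
        -(2 / (kappa ω) ^ 2) * a₀ ω - ω.2 / (4 * σ * ω.1 ^ ((3 : ℝ) / 2)) * a₁ ω)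
    (h01 : ∀ ω : ℝ × ℝ, ω.2 ^ 2 < 4 * ω.1 →
      fderiv ℝ a₀ ω (0, 1) =
        ω.2 / (kappa ω) ^ 2 * a₀ ω + 1 / (2 * σ * Real.sqrt ω.1) * a₁ ω)
    (h10 : ∀ ω : ℝ × ℝ, ω.2 ^ 2 < 4 * ω.1 →
      fderiv ℝ a₁ ω (1, 0) =
        -(ω.2 / (σ * Real.sqrt ω.1 * (kappa ω) ^ 2)) * a₀ ω -
          (ω.2 ^ 2 * (2 + σ) + 4 * σ * ω.1) / (2 * σ * ω.1 * (kappa ω) ^ 2) * a₁ ω)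
    (h11 : ∀ ω : ℝ × ℝ, ω.2 ^ 2 < 4 * ω.1 →
      fderiv ℝ a₁ ω (0, 1) =
        2 * Real.sqrt ω.1 / (σ * (kappa ω) ^ 2) * a₀ ω +
          2 * ω.2 * (σ + 1) / (σ * (kappa ω) ^ 2) * a₁ ω)
    (G : ℝ × ℝ → ℝ)
    (hG : ∀ ω : ℝ × ℝ,
      G ω = 4 * kappaT σ ω * ω.2 * (σ - 2) * Real.sqrt ω.1 * a₀ ω +
        2 * kappaT σ ω * (kappa ω) ^ 2 * a₁ ω) :
    ∀ ω : ℝ × ℝ, ω.2 ^ 2 < 4 * ω.1 →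
      fderiv ℝ G ω (1, 0) =
        2 * ω.2 * kappaT σ ω * a₀ ω / (σ * (kappa ω) ^ 2 * Real.sqrt ω.1) *
            (4 * (2 - 3 * σ) * (σ - 2) * ω.1 - (σ - 1) * (kappa ω) ^ 2) +
          kappaT σ ω * a₁ ω / (σ * ω.1) *
            (4 * (2 - σ) * ω.1 - 2 * σ * ω.2 ^ 2 - (1 + σ) * (kappa ω) ^ 2) := by
  rintro ⟨x, y⟩ h
  have hx : 0 < x := omega_fst_pos h
  have hG' : G = fun ω => 4 * kappaT σ ω * ω.2 * (σ - 2) * Real.sqrt ω.1 * a₀ ω +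
      2 * kappaT σ ω * (kappa ω) ^ 2 * a₁ ω := funext hG
  have hGd : DifferentiableAt ℝ G (x, y) := by
    have hT := kappaT_differentiableAt σ h
    have hk := kappa_differentiableAt h
    have d0 := hdiff₀ _ h
    have d1 := hdiff₁ _ h
    have hs : DifferentiableAt ℝ (fun ω : ℝ × ℝ => Real.sqrt ω.1) (x, y) :=
      differentiableAt_fst.sqrt hx.ne'
    rw [hG']
    fun_prop
  have hT := kappaT_hasDerivAt σ h
  have hk := kappa_hasDerivAt h
  have d0 := hasDerivAt_fst_line (hdiff₀ _ h)
  have d1 := hasDerivAt_fst_line (hdiff₁ _ h)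
  have hs := (hasDerivAt_id x).sqrt hx.ne'
  have key := ((((hT.const_mul 4).mul_const y).mul_const (σ - 2)).mul hs |>.mul d0).add
    (((hT.const_mul 2).mul (hk.pow 2)).mul d1)
  have hline := hasDerivAt_fst_line hGd
  have key2 : HasDerivAt (fun t => G (t, y)) _ x :=
    key.congr_of_eventuallyEq (Filter.Eventually.of_forall fun t => hG (t, y))
  rw [hline.unique key2, h00 _ h, h10 _ h]
  have hkp : 0 < kappa (x, y) := kappa_pos h
  have hsp : 0 < Real.sqrt x := Real.sqrt_pos.2 hx
  have hs2 : x = Real.sqrt x ^ 2 := (Real.sq_sqrt hx.le).symm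
  have h32 : x ^ ((3 : ℝ) / 2) = Real.sqrt x ^ 3 := by
    rw [Real.sqrt_eq_rpow, ← Real.rpow_natCast, ← Real.rpow_mul hx.le]
    norm_num
  have hσ : σ ≠ 0 := by linarith
  simp only [id, Pi.mul_apply, Pi.pow_apply, h32]
  -- With `ω₀ = s²`, the remaining goal is rational in `K, A, B, k, s, y, σ`.
  generalize kappaT σ (x, y) = K at *
  generalize a₀ (x, y) = A at *
  generalize a₁ (x, y) = B at *
  generalize kappa (x, y) = k at *
  generalize Real.sqrt x = s at *
  clear hT hk d0 d1 hs key hline key2 hGd hG' hG h00 h01 h10 h11 hdiff₀ hdiff₁ h32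
  subst hs2
  field_simp
  ring
end

section
/- Let ω = (ω₀,ω₁) ∈ ℝ² with ω₀ > 0, and let d : ℝ² → ℝ be three times continuously differentiable on a neighborhood U of ω with ∂²_{ω₁} d(ω') = ω₀' ∂²_{ω₀} d(ω') for every ω' = (ω₀',ω₁') ∈ U. Assume ∂_{ω₀}∂_{ω₁} d(ω) = −ω₀^{1/2} ∂²_{ω₀} d(ω), and set ξ = (−ω₀ ∂²_{ω₀} d(ω), ∂_{ω₀}∂_{ω₁} d(ω)). Then the third derivative of λ ↦ d(ω + λξ) at λ = 0 equals ω₀² (∂²_{ω₀} d(ω))³ [ −4 ∂_{ω₀}∂²_{ω₁} d(ω) − 4 ω₀^{1/2} ∂²_{ω₀}∂_{ω₁} d(ω) + ∂²_{ω₀} d(ω) ]. -/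
/-!
Put `s = √ω₀` and `a = ∂₀²d(ω)`. The mixed-derivative hypothesis makes the direction
`ξ = -a s (s, 1)`, so the third derivative along `ξ` is the cubic form
`-a³ s³ (s³ d₀₀₀ + 3 s² d₀₀₁ + 3 s d₀₁₁ + d₁₁₁)` in the third partials at `ω`. Differentiating
`∂₁²d = ω₀ ∂₀²d` in each coordinate gives `d₀₁₁ = a + s² d₀₀₀` and `d₁₁₁ = s² d₀₀₁`; these
eliminate `d₀₀₀` and `d₁₁₁`, and what is left is the claimed expression.

The analytic input is that differentiating along the line amounts to applying the operator
`ξ₀ ∂₀ + ξ₁ ∂₁` (`deriv_line`), together with symmetry of second derivatives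
(`pd_comm`), which brings all mixed third partials to the form used above.
-/

/-- Partial derivative in the first coordinate. -/
noncomputable def pd0 (f : ℝ × ℝ → ℝ) (ω : ℝ × ℝ) : ℝ := fderiv ℝ f ω (1, 0)

/-- Partial derivative in the second coordinate. -/
noncomputable def pd1 (f : ℝ × ℝ → ℝ) (ω : ℝ × ℝ) : ℝ := fderiv ℝ f ω (0, 1)

lemma contDiffOn_fderiv_apply {U : Set (ℝ × ℝ)} (hU : IsOpen U) {f : ℝ × ℝ → ℝ} {m n : ℕ}
    (hmn : m + 1 ≤ n) (hf : ContDiffOn ℝ n f U) (v : ℝ × ℝ) :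
    ContDiffOn ℝ m (fun x => fderiv ℝ f x v) U :=
  (hf.fderiv_of_isOpen hU (by exact_mod_cast hmn)).clm_apply contDiffOn_const

lemma contDiffOn_pd0 {U : Set (ℝ × ℝ)} (hU : IsOpen U) {f : ℝ × ℝ → ℝ} {m n : ℕ}
    (hmn : m + 1 ≤ n) (hf : ContDiffOn ℝ n f U) : ContDiffOn ℝ m (pd0 f) U :=
  contDiffOn_fderiv_apply hU hmn hf (1, 0)

lemma contDiffOn_pd1 {U : Set (ℝ × ℝ)} (hU : IsOpen U) {f : ℝ × ℝ → ℝ} {m n : ℕ}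
    (hmn : m + 1 ≤ n) (hf : ContDiffOn ℝ n f U) : ContDiffOn ℝ m (pd1 f) U :=
  contDiffOn_fderiv_apply hU hmn hf (0, 1)

lemma differentiableAt_of_contDiffOn {U : Set (ℝ × ℝ)} (hU : IsOpen U) {f : ℝ × ℝ → ℝ} {n : ℕ}
    (hn : n ≠ 0) (hf : ContDiffOn ℝ n f U) {x : ℝ × ℝ} (hx : x ∈ U) :
    DifferentiableAt ℝ f x :=
  (hf.contDiffAt (hU.mem_nhds hx)).differentiableAt (by exact_mod_cast hn)

/-- Symmetry of second derivatives for a `C²` function on an open set. -/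
lemma pd_comm {U : Set (ℝ × ℝ)} (hU : IsOpen U) {f : ℝ × ℝ → ℝ} {n : ℕ} (hn : 2 ≤ n)
    (hf : ContDiffOn ℝ n f U) {x : ℝ × ℝ} (hx : x ∈ U) :
    pd1 (pd0 f) x = pd0 (pd1 f) x := by
  have hfx : ContDiffAt ℝ n f x := hf.contDiffAt (hU.mem_nhds hx)
  have hsymm : IsSymmSndFDerivAt ℝ f x :=
    hfx.isSymmSndFDerivAt (by simpa using (by exact_mod_cast hn : (2 : WithTop ℕ∞) ≤ n))
  have hdiff : DifferentiableAt ℝ (fderiv ℝ f) x :=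
    (hfx.fderiv_right (m := 1) (by exact_mod_cast hn)).differentiableAt one_ne_zero
  have key : ∀ v w : ℝ × ℝ,
      fderiv ℝ (fun y => fderiv ℝ f y v) x w = fderiv ℝ (fderiv ℝ f) x w v := by
    intro v w
    rw [fderiv_clm_apply hdiff (differentiableAt_const v)]
    simp
  change fderiv ℝ (fun y => fderiv ℝ f y (1, 0)) x (0, 1) =
    fderiv ℝ (fun y => fderiv ℝ f y (0, 1)) x (1, 0)
  rw [key, key]
  exact hsymm.eq _ _

lemma pd0_congr {U : Set (ℝ × ℝ)} (hU : IsOpen U) {f g : ℝ × ℝ → ℝ}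
    (h : ∀ y ∈ U, f y = g y) {x : ℝ × ℝ} (hx : x ∈ U) : pd0 f x = pd0 g x := by
  have : f =ᶠ[nhds x] g := Filter.eventually_of_mem (hU.mem_nhds hx) h
  simp only [pd0, this.fderiv_eq]

lemma pd1_congr {U : Set (ℝ × ℝ)} (hU : IsOpen U) {f g : ℝ × ℝ → ℝ}
    (h : ∀ y ∈ U, f y = g y) {x : ℝ × ℝ} (hx : x ∈ U) : pd1 f x = pd1 g x := by
  have : f =ᶠ[nhds x] g := Filter.eventually_of_mem (hU.mem_nhds hx) h
  simp only [pd1, this.fderiv_eq]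

/-- Chain rule along a line, in terms of the two partial derivatives. -/
lemma deriv_line {g : ℝ × ℝ → ℝ} {ω ξ : ℝ × ℝ} {t : ℝ}
    (hg : DifferentiableAt ℝ g (ω + t • ξ)) :
    HasDerivAt (fun l : ℝ => g (ω + l • ξ))
      (ξ.1 * pd0 g (ω + t • ξ) + ξ.2 * pd1 g (ω + t • ξ)) t := by
  have hline : HasDerivAt (fun l : ℝ => ω + l • ξ) ξ t := by
    simpa using ((hasDerivAt_id t).smul_const ξ).const_add ω
  have h := hg.hasFDerivAt.comp_hasDerivAt t hline
  have hξ : ξ = ξ.1 • ((1 : ℝ), (0 : ℝ)) + ξ.2 • ((0 : ℝ), (1 : ℝ)) := by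
    ext <;> simp
  have hval : fderiv ℝ g (ω + t • ξ) ξ =
      ξ.1 * pd0 g (ω + t • ξ) + ξ.2 * pd1 g (ω + t • ξ) := by
    conv_lhs => rw [hξ, map_add, map_smul, map_smul]
    simp only [pd0, pd1, smul_eq_mul, ← hξ]
  rw [← hval]
  exact h

/-- The third derivative along a line is the cubic form in the third partial derivatives. -/
lemma iteratedDeriv_three_line {U : Set (ℝ × ℝ)} (hU : IsOpen U) {d : ℝ × ℝ → ℝ}
    (hd : ContDiffOn ℝ (3 : ℕ) d U) {ω : ℝ × ℝ} (hω : ω ∈ U) (ξ : ℝ × ℝ) :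
    iteratedDeriv 3 (fun l : ℝ => d (ω + l • ξ)) 0 =
      ξ.1 ^ 3 * pd0 (pd0 (pd0 d)) ω + 3 * ξ.1 ^ 2 * ξ.2 * pd0 (pd0 (pd1 d)) ω +
        3 * ξ.1 * ξ.2 ^ 2 * pd0 (pd1 (pd1 d)) ω + ξ.2 ^ 3 * pd1 (pd1 (pd1 d)) ω := by
  have h0 : ContDiffOn ℝ (2 : ℕ) (pd0 d) U := contDiffOn_pd0 hU le_rfl hd
  have h1 : ContDiffOn ℝ (2 : ℕ) (pd1 d) U := contDiffOn_pd1 hU le_rfl hd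
  have h00 : ContDiffOn ℝ (1 : ℕ) (pd0 (pd0 d)) U := contDiffOn_pd0 hU le_rfl h0
  have h01 : ContDiffOn ℝ (1 : ℕ) (pd0 (pd1 d)) U := contDiffOn_pd0 hU le_rfl h1
  have h11 : ContDiffOn ℝ (1 : ℕ) (pd1 (pd1 d)) U := contDiffOn_pd1 hU le_rfl h1
  have hcont : Continuous fun l : ℝ => ω + l • ξ := by fun_prop
  have hV : IsOpen {l : ℝ | ω + l • ξ ∈ U} := hU.preimage hcont
  have h0V : (0 : ℝ) ∈ {l : ℝ | ω + l • ξ ∈ U} := by simpa using hω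
  have e1 : ∀ t ∈ {l : ℝ | ω + l • ξ ∈ U}, deriv (fun l : ℝ => d (ω + l • ξ)) t =
      ξ.1 * pd0 d (ω + t • ξ) + ξ.2 * pd1 d (ω + t • ξ) := fun t ht =>
    (deriv_line (differentiableAt_of_contDiffOn hU (by simp) hd ht)).deriv
  have e2 : ∀ t ∈ {l : ℝ | ω + l • ξ ∈ U}, deriv (deriv (fun l : ℝ => d (ω + l • ξ))) t =
      ξ.1 ^ 2 * pd0 (pd0 d) (ω + t • ξ) + 2 * ξ.1 * ξ.2 * pd0 (pd1 d) (ω + t • ξ) +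
        ξ.2 ^ 2 * pd1 (pd1 d) (ω + t • ξ) := by
    intro t ht
    rw [(Filter.eventuallyEq_of_mem (hV.mem_nhds ht) e1).deriv_eq]
    have a0 := deriv_line (differentiableAt_of_contDiffOn hU (by simp) h0 ht)
    have a1 := deriv_line (differentiableAt_of_contDiffOn hU (by simp) h1 ht)
    refine ((a0.const_mul ξ.1).add (a1.const_mul ξ.2)).deriv.trans ?_
    rw [pd_comm hU (by simp) hd ht]
    ring
  have hz : ω + (0 : ℝ) • ξ = ω := by simp
  rw [iteratedDeriv_succ, iteratedDeriv_succ, iteratedDeriv_one,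
    (Filter.eventuallyEq_of_mem (hV.mem_nhds h0V) e2).deriv_eq]
  have a00 := deriv_line (differentiableAt_of_contDiffOn hU (by simp) h00 h0V)
  have a01 := deriv_line (differentiableAt_of_contDiffOn hU (by simp) h01 h0V)
  have a11 := deriv_line (differentiableAt_of_contDiffOn hU (by simp) h11 h0V)
  refine (((a00.const_mul (ξ.1 ^ 2)).add (a01.const_mul (2 * ξ.1 * ξ.2))).add
    (a11.const_mul (ξ.2 ^ 2))).deriv.trans ?_
  rw [hz, pd_comm hU le_rfl h0 hω, pd0_congr hU (fun y hy => pd_comm hU (by simp) hd hy) hω,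
    pd_comm hU le_rfl h1 hω]
  ring

theorem third_derivative_along_kernel_direction_case_neg
    (ω : ℝ × ℝ) (hω : 0 < ω.1) (d : ℝ × ℝ → ℝ)
    (U : Set (ℝ × ℝ)) (hU : IsOpen U) (hωU : ω ∈ U)
    (hd : ContDiffOn ℝ 3 d U)
    (hid : ∀ ω' ∈ U, pd1 (pd1 d) ω' = ω'.1 * pd0 (pd0 d) ω')
    (hmix : pd0 (pd1 d) ω = -(Real.sqrt ω.1) * pd0 (pd0 d) ω)
    (ξ : ℝ × ℝ) (hξ : ξ = (-(ω.1 * pd0 (pd0 d) ω), pd0 (pd1 d) ω)) :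
    iteratedDeriv 3 (fun lam : ℝ => d (ω + lam • ξ)) 0 =
      ω.1 ^ 2 * (pd0 (pd0 d) ω) ^ 3 *
        (-(4 * pd0 (pd1 (pd1 d)) ω) - 4 * Real.sqrt ω.1 * pd0 (pd0 (pd1 d)) ω +
          pd0 (pd0 d) ω) := by
  have hd3 : ContDiffOn ℝ (3 : ℕ) d U := hd
  have h0 : ContDiffOn ℝ (2 : ℕ) (pd0 d) U := contDiffOn_pd0 hU le_rfl hd3
  have h00 : ContDiffOn ℝ (1 : ℕ) (pd0 (pd0 d)) U := contDiffOn_pd0 hU le_rfl h0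
  have hprod : HasFDerivAt (fun x : ℝ × ℝ => x.1 * pd0 (pd0 d) x) _ ω :=
    (hasFDerivAt_fst (𝕜 := ℝ) (p := ω)).mul
      (differentiableAt_of_contDiffOn hU (by simp) h00 hωU).hasFDerivAt
  have h011 : pd0 (pd1 (pd1 d)) ω = pd0 (pd0 d) ω + ω.1 * pd0 (pd0 (pd0 d)) ω := by
    rw [pd0_congr hU hid hωU, pd0, hprod.fderiv]
    simp [pd0]
    ring
  have h111 : pd1 (pd1 (pd1 d)) ω = ω.1 * pd0 (pd0 (pd1 d)) ω := by
    have hswap : pd1 (pd0 (pd0 d)) ω = pd0 (pd0 (pd1 d)) ω := by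
      rw [pd_comm hU le_rfl h0 hωU]
      exact pd0_congr hU (fun y hy => pd_comm hU (by simp) hd3 hy) hωU
    rw [pd1_congr hU hid hωU, ← hswap, pd1, hprod.fderiv]
    simp [pd1]
  have hs : ω.1 = Real.sqrt ω.1 ^ 2 := (Real.sq_sqrt hω.le).symm
  rw [iteratedDeriv_three_line hU hd3 hωU ξ, h111, h011, hξ, hmix]
  -- With `ω₀ = s²` for `s = √ω₀`, the claim is a polynomial identity in `s` and the partials.
  generalize Real.sqrt ω.1 = s at hs ⊢
  rw [hs]
  ring
end

section
/- Let 1 < σ < 2, z₀ ∈ (−1,1), ω₀ > 0, κ̃ > 0, α₀ > 0 and α₁ ∈ ℝ satisfy (σ + z₀ − 1) α₀ = (1 − z₀²) α₁. Define A = 8 κ̃ ω₀^{1/2} α₀ (z₀² − σ + 1) + 8 κ̃ ω₀^{1/2} α₁ z₀ (z₀² − 1), B = (4 ω₀^{1/2} κ̃ α₀ / (σ(1 − z₀²))) [ (3σ−2)(σ−2) z₀² + (σ−1)² (1 − z₀²) ] + (4(3σ−2) z₀ ω₀^{1/2} κ̃ α₁)/σ, and C = (4 z₀ κ̃ α₀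 / (σ(1 − z₀²))) [ (2−3σ)(σ−2) − (σ−1)(1 − z₀²) ] + (4 κ̃ α₁ / σ)(−σ z₀² + z₀² − 2σ + 1). Then −4B − 4 ω₀^{1/2} C + A = (8 ω₀^{1/2} κ̃ α₀ / (σ(1 − z₀²))) · σ(σ−1)(z₀−1)²(z₀+1), and in particular −4B − 4 ω₀^{1/2} C + A ≠ 0. -/
/-! The relation `hrel` expresses `α₁` as `(σ + z₀ - 1) α₀ / (1 - z₀²)`. After this substitution the
combination is a rational function with denominator `σ (1 - z₀²)`, and the first claim is a
polynomial identity. In its right-hand side every factor is positive for `σ > 1`, `|z₀| < 1`,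
which gives the second claim. -/

theorem borderline_combination_case_neg
    (σ z₀ ω₀ κ α₀ α₁ A B C : ℝ)
    (hσ₁ : 1 < σ) (hσ₂ : σ < 2) (hz : z₀ ∈ Set.Ioo (-1 : ℝ) 1)
    (hω₀ : 0 < ω₀) (hκ : 0 < κ) (hα₀ : 0 < α₀)
    (hrel : (σ + z₀ - 1) * α₀ = (1 - z₀ ^ 2) * α₁)
    (hA : A = 8 * κ * Real.sqrt ω₀ * α₀ * (z₀ ^ 2 - σ + 1) +
      8 * κ * Real.sqrt ω₀ * α₁ * z₀ * (z₀ ^ 2 - 1))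
    (hB : B = 4 * Real.sqrt ω₀ * κ * α₀ / (σ * (1 - z₀ ^ 2)) *
        ((3 * σ - 2) * (σ - 2) * z₀ ^ 2 + (σ - 1) ^ 2 * (1 - z₀ ^ 2)) +
      4 * (3 * σ - 2) * z₀ * Real.sqrt ω₀ * κ * α₁ / σ)
    (hC : C = 4 * z₀ * κ * α₀ / (σ * (1 - z₀ ^ 2)) *
        ((2 - 3 * σ) * (σ - 2) - (σ - 1) * (1 - z₀ ^ 2)) +
      4 * κ * α₁ / σ * (-(σ * z₀ ^ 2) + z₀ ^ 2 - 2 * σ + 1)) :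
    -(4 * B) - 4 * Real.sqrt ω₀ * C + A =
        8 * Real.sqrt ω₀ * κ * α₀ / (σ * (1 - z₀ ^ 2)) *
          (σ * (σ - 1) * (z₀ - 1) ^ 2 * (z₀ + 1)) ∧
      -(4 * B) - 4 * Real.sqrt ω₀ * C + A ≠ 0 := by
  obtain ⟨hz₁, hz₂⟩ := hz
  have hD : 0 < 1 - z₀ ^ 2 := by nlinarith
  have hσ : 0 < σ := by linarith
  have hs : 0 < Real.sqrt ω₀ := Real.sqrt_pos.mpr hω₀
  have key : -(4 * B) - 4 * Real.sqrt ω₀ * C + A =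
      8 * Real.sqrt ω₀ * κ * α₀ / (σ * (1 - z₀ ^ 2)) *
        (σ * (σ - 1) * (z₀ - 1) ^ 2 * (z₀ + 1)) := by
    have hα₁ : α₁ = (σ + z₀ - 1) * α₀ / (1 - z₀ ^ 2) := by
      rw [eq_div_iff hD.ne']
      linarith
    subst hA hB hC hα₁
    have hD' := hD.ne'
    field_simp
    ring
  refine ⟨key, ?_⟩
  rw [key]
  have h₁ : 0 < σ - 1 := by linarith
  have h₂ : 0 < z₀ + 1 := by linarith
  have h₃ : 0 < (z₀ - 1) ^ 2 := sq_pos_of_neg (by linarith)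
  positivity
end
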